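/- Let Φ : ℝ^d → ℝ be differentiable with L_Φ-Lipschitz gradient, bounded below by Φ*, let S_o > 0, let q ≥ 1 be an integer, let ε > 0, set η = 1/max(√(6 S_o q), 2 L_Φ), and let x_0, F_0, …, F_{T−1} ∈ ℝ^d define iterates x_{t+1} = x_t − η F_t. Suppose that for every t with 0 ≤ t ≤ T−1, ‖F_t − ∇Φ(x_t)‖² ≤ 3 S_o η² Σ_{s = ⌊t/q⌋·q}^{t−1} ‖F_s‖², and that T ≥ (2 (Φ(x_0) − Φ*)/ε²) · max(√(6 S_o q), 2 L_Φ). Then (1/T) Σ_{t=0}^{T−1} ‖∇Φ(x_t)‖² ≤ ε², and in particular there exists t < T with ‖∇Φ(x_t)‖ ≤ ε. -/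

import Mathlib

open scoped BigOperators

lemma descent_aux {E : Type*} [NormedAddCommGroup E] [InnerProductSpace ℝ E] [CompleteSpace E]
    (Φ : E → ℝ) (hΦ : Differentiable ℝ Φ) (L : ℝ)
    (hlip : ∀ x x', ‖gradient Φ x - gradient Φ x'‖ ≤ L * ‖x - x'‖) (x v : E) :
    Φ (x + v) ≤ Φ x + inner ℝ (gradient Φ x) v + L / 2 * ‖v‖ ^ 2 := by
  let h : ℝ → ℝ := fun t => Φ (x + t • v) - t * inner ℝ (gradient Φ x) v - L / 2 * ‖v‖ ^ 2 * t ^ 2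
  have hd : ∀ t, HasDerivAt h (inner ℝ (gradient Φ (x + t • v)) v - inner ℝ (gradient Φ x) v
      - L * ‖v‖ ^ 2 * t) t := by
    intro t
    have h1 : HasFDerivAt Φ (InnerProductSpace.toDual ℝ E (gradient Φ (x + t • v))) (x + t • v) :=
      (hΦ (x + t • v)).hasGradientAt.hasFDerivAt
    have h2 : HasDerivAt (fun t : ℝ => x + t • v) v t := by
      simpa using ((hasDerivAt_id t).smul_const v).const_add x
    have h3 := h1.comp_hasDerivAt t h2
    have h4 := (h3.sub ((hasDerivAt_id t).mul_const (inner ℝ (gradient Φ x) v))).sub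
      (((hasDerivAt_id t).pow 2).const_mul (L / 2 * ‖v‖ ^ 2))
    refine h4.congr_deriv ?_
    simp
    ring
  have ha : AntitoneOn h (Set.Icc 0 1) := by
    apply antitoneOn_of_deriv_nonpos (convex_Icc 0 1)
    · exact fun t _ => (hd t).continuousAt.continuousWithinAt
    · exact fun t _ => (hd t).differentiableAt.differentiableWithinAt
    · intro t ht
      rw [interior_Icc] at ht
      rw [(hd t).deriv, ← inner_sub_left]
      have h1 := real_inner_le_norm (gradient Φ (x + t • v) - gradient Φ x) v
      have h2 := hlip (x + t • v) x
      rw [add_sub_cancel_left, norm_smul, Real.norm_of_nonneg ht.1.le] at h2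
      have h3 := mul_le_mul_of_nonneg_right h2 (norm_nonneg v)
      nlinarith
  have := ha (Set.left_mem_Icc.2 zero_le_one) (Set.right_mem_Icc.2 zero_le_one) zero_le_one
  simp only [h, one_smul, zero_smul, add_zero] at this
  linarith

lemma sum_swap_aux (a : ℕ → ℝ) (ha : ∀ s, 0 ≤ a s) (q T : ℕ) (hq : 1 ≤ q) :
    ∑ t ∈ Finset.range T, ∑ s ∈ Finset.Ico (t / q * q) t, a s
      ≤ q * ∑ s ∈ Finset.range T, a s := by
  rw [Finset.sum_comm' (t' := Finset.range T)
    (s' := fun s => (Finset.range T).filter (fun t => t / q * q ≤ s ∧ s < t))]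
  · rw [Finset.mul_sum]
    refine Finset.sum_le_sum fun s _ => ?_
    rw [Finset.sum_const, nsmul_eq_mul]
    refine mul_le_mul_of_nonneg_right ?_ (ha s)
    have : (Finset.range T).filter (fun t => t / q * q ≤ s ∧ s < t) ⊆ Finset.Ico s (s + q) := by
      intro t ht
      simp only [Finset.mem_filter, Finset.mem_range, Finset.mem_Ico] at ht ⊢
      have h1 := Nat.div_add_mod' t q
      have h2 := Nat.mod_lt t hq
      omega
    have := Finset.card_le_card this
    rw [Nat.card_Ico] at this
    exact_mod_cast (by omega)
  · intro t s
    simp only [Finset.mem_filter, Finset.mem_range, Finset.mem_Ico]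
    omega

/-- Finite-sum convergence theorem (deterministic per-trajectory form): with the stepsize
`η = 1/max(√(6 S_o q), 2 L_Φ)` and `T ≥ (2(Φ(x_0) − Φ*)/ε²)·max(√(6 S_o q), 2 L_Φ)`,
the average squared gradient norm is at most `ε²`, so some iterate is `ε`-accurate. -/
theorem sarah_compositional_finite_sum_convergence
    (d : ℕ) (LΦ η Φstar So ε : ℝ) (q T : ℕ) (hq : 1 ≤ q) (hT : 1 ≤ T)
    (hLΦ : 0 ≤ LΦ) (hSo : 0 < So) (hε : 0 < ε)
    (hη : η = 1 / max (Real.sqrt (6 * So * (q : ℝ))) (2 * LΦ))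
    (Φ : EuclideanSpace ℝ (Fin d) → ℝ) (hΦ : Differentiable ℝ Φ)
    (hlip : ∀ x x', ‖gradient Φ x - gradient Φ x'‖ ≤ LΦ * ‖x - x'‖)
    (hbound : ∀ x, Φstar ≤ Φ x)
    (x F : ℕ → EuclideanSpace ℝ (Fin d))
    (hupd : ∀ t < T, x (t + 1) = x t - η • F t)
    (herr : ∀ t < T, ‖F t - gradient Φ (x t)‖ ^ 2
        ≤ 3 * So * η ^ 2 * ∑ s ∈ Finset.Ico (t / q * q) t, ‖F s‖ ^ 2)
    (hTlarge : 2 * (Φ (x 0) - Φstar) / ε ^ 2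
        * max (Real.sqrt (6 * So * (q : ℝ))) (2 * LΦ) ≤ (T : ℝ)) :
    (1 / (T : ℝ)) * ∑ t ∈ Finset.range T, ‖gradient Φ (x t)‖ ^ 2 ≤ ε ^ 2 ∧
    ∃ t < T, ‖gradient Φ (x t)‖ ≤ ε := by
  set M := max (Real.sqrt (6 * So * (q : ℝ))) (2 * LΦ) with hM
  have hq0 : (0 : ℝ) < q := by exact_mod_cast hq
  have hsq : 0 < Real.sqrt (6 * So * (q : ℝ)) := Real.sqrt_pos.2 (by positivity)
  have hM0 : 0 < M := lt_of_lt_of_le hsq (le_max_left _ _)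
  have hML : 2 * LΦ ≤ M := le_max_right _ _
  have hMs : 6 * So * q ≤ M ^ 2 := by
    rw [← Real.sq_sqrt (show 0 ≤ 6 * So * (q : ℝ) by positivity)]
    exact pow_le_pow_left₀ hsq.le (le_max_left _ _) 2
  have hη0 : 0 < η := by rw [hη]; positivity
  have hηM : η * M = 1 := by rw [hη]; field_simp
  have hηL : LΦ * η ≤ 1 / 2 := by nlinarith
  have hηS : 3 * So * η ^ 2 * q ≤ 1 / 2 := by
    have h1 : η ^ 2 * (6 * So * q) ≤ η ^ 2 * M ^ 2 := mul_le_mul_of_nonneg_left hMs (by positivity)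
    rw [← mul_pow, hηM] at h1
    linarith
  have step : ∀ t < T, ‖gradient Φ (x t)‖ ^ 2 ≤ 2 * M * (Φ (x t) - Φ (x (t + 1)))
      - 1 / 2 * ‖F t‖ ^ 2 + ‖F t - gradient Φ (x t)‖ ^ 2 := by
    intro t ht
    have h1 := descent_aux Φ hΦ LΦ hlip (x t) (-(η • F t))
    rw [← sub_eq_add_neg, ← hupd t ht, norm_neg, norm_smul, Real.norm_of_nonneg hη0.le,
      inner_neg_right, inner_smul_right] at h1
    have h2 := norm_sub_sq_real (F t) (gradient Φ (x t))
    rw [real_inner_comm] at h2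
    have h3 : LΦ / 2 * (η * ‖F t‖) ^ 2 ≤ η * (1 / 4 * ‖F t‖ ^ 2) := by
      have := mul_le_mul_of_nonneg_right hηL (show 0 ≤ η * ‖F t‖ ^ 2 by positivity)
      nlinarith
    have h4 : Φ (x (t + 1)) - Φ (x t) ≤
        η * (- inner ℝ (gradient Φ (x t)) (F t) + 1 / 4 * ‖F t‖ ^ 2) := by linarith
    have h5 := mul_le_mul_of_nonneg_left h4 hM0.le
    rw [← mul_assoc, mul_comm M η, hηM, one_mul] at h5
    linarith
  have hsum : ∑ t ∈ Finset.range T, ‖gradient Φ (x t)‖ ^ 2 ≤ 2 * M * (Φ (x 0) - Φstar) := by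
    have h1 := Finset.sum_le_sum (fun t ht => step t (Finset.mem_range.1 ht))
    rw [Finset.sum_add_distrib, Finset.sum_sub_distrib, ← Finset.mul_sum, ← Finset.mul_sum,
      Finset.sum_range_sub'] at h1
    have h2 := Finset.sum_le_sum (fun t ht => herr t (Finset.mem_range.1 ht))
    rw [← Finset.mul_sum] at h2
    have h3 := mul_le_mul_of_nonneg_left (sum_swap_aux (fun s => ‖F s‖ ^ 2)
      (fun s => by positivity) q T hq) (show 0 ≤ 3 * So * η ^ 2 by positivity)
    have h4 := mul_le_mul_of_nonneg_right hηS
      (show 0 ≤ ∑ s ∈ Finset.range T, ‖F s‖ ^ 2 by positivity)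
    have h5 := mul_le_mul_of_nonneg_left (hbound (x T)) (show 0 ≤ 2 * M by positivity)
    linarith
  have hT0 : (0 : ℝ) < T := by exact_mod_cast hT
  have hfin : ∑ t ∈ Finset.range T, ‖gradient Φ (x t)‖ ^ 2 ≤ T * ε ^ 2 := by
    have h1 := mul_le_mul_of_nonneg_right hTlarge (show 0 ≤ ε ^ 2 by positivity)
    have h2 : 2 * (Φ (x 0) - Φstar) / ε ^ 2 * M * ε ^ 2 = 2 * M * (Φ (x 0) - Φstar) := by
      field_simp
    linarith
  refine ⟨?_, ?_⟩
  · rw [one_div, inv_mul_le_iff₀ hT0]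
    exact hfin
  · by_contra! hc
    have : ∑ t ∈ Finset.range T, ε ^ 2 < ∑ t ∈ Finset.range T, ‖gradient Φ (x t)‖ ^ 2 := by
      apply Finset.sum_lt_sum_of_nonempty
      · exact Finset.nonempty_range_iff.2 (by omega)
      · intro t ht
        exact pow_lt_pow_left₀ (hc t (Finset.mem_range.1 ht)) hε.le two_ne_zero
    rw [Finset.sum_const, Finset.card_range, nsmul_eq_mul] at this
    linarith
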